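/- arXiv:math-ph/0303035 — 5 statements merged into one kernel-verified Lean document; each statement's English description precedes it below -/
import Mathlib

section
/- Let k be a commutative ring, n ≥ 1, m ≥ 1, and let A : Fin m → Matrix (Fin n) (Fin n) k be matrices each of which coincides with the identity matrix in every row except the last row. Write b s q := A s (Fin.last) q for q ≠ Fin.last and d s := A s (Fin.last) (Fin.last). Then the product P = A (m-1) * ⋯ * A 1 * A 0 satisfies, for every column index q ≠ Fin.last: P (Fin.last) q = ∑_{s=0}^{m-1} ( ∏_{t=s+1}^{m-1} d t ) * b s q. -/
/-!
Right multiplication by a matrix `N` that agrees with the identity outside row `i` only uses the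
`i`-th entry of each row: it scales that entry by `N i i` and adds multiples of it to the others.
Splitting the rightmost factor `A 0` off the product therefore gives the recursion
`P i q = P' i i * A 0 i q + P' i q` for `q ≠ i`, where `P'` is the product of the remaining factors
and `P' i i` is the product of their diagonal entries.
-/

/-- A square matrix agreeing with the identity matrix outside row `i`, such as the one-step matrices
of the local curvature operator. Row `i` itself is unconstrained. -/
def IsOneOffRow {R ι : Type*} [Zero R] [One R] [DecidableEq ι] (i : ι) (N : Matrix ι ι R) : Prop :=
  ∀ j, j ≠ i → ∀ q, N j q = (1 : Matrix ι ι R) j q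

namespace IsOneOffRow

variable {R ι κ : Type*} [Fintype ι] [DecidableEq ι] {i : ι}

section NonAssocSemiring

variable [NonAssocSemiring R] {N : Matrix ι ι R}

theorem mul_apply_self (hN : IsOneOffRow i N) (M : Matrix κ ι R) (a : κ) :
    (M * N) a i = M a i * N i i := by
  rw [Matrix.mul_apply]
  refine Fintype.sum_eq_single i fun j hj => ?_
  rw [hN j hj, Matrix.one_apply_ne hj, mul_zero]

theorem mul_apply_of_ne (hN : IsOneOffRow i N) (M : Matrix κ ι R) (a : κ) {q : ι} (hq : q ≠ i) :
    (M * N) a q = M a i * N i q + M a q := by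
  rw [Matrix.mul_apply, Fintype.sum_eq_add i q hq.symm]
  · rw [hN q hq, Matrix.one_apply_eq, mul_one]
  · rintro j ⟨hji, hjq⟩
    rw [hN j hji, Matrix.one_apply_ne hjq, mul_zero]

end NonAssocSemiring

theorem list_prod_apply_self [Semiring R] {l : List (Matrix ι ι R)}
    (hl : ∀ N ∈ l, IsOneOffRow i N) : l.prod i i = (l.map fun N => N i i).prod := by
  induction l using List.reverseRecOn with
  | nil => simp
  | append_singleton l N ih =>
    simp only [List.forall_mem_append, List.forall_mem_singleton] at hl
    simp only [List.prod_append, List.prod_singleton, List.map_append, List.map_singleton,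
      hl.2.mul_apply_self, ih hl.1]

theorem reverse_ofFn_prod_apply_self [CommSemiring R] {m : ℕ} {A : Fin m → Matrix ι ι R}
    (hA : ∀ s, IsOneOffRow i (A s)) : (List.ofFn A).reverse.prod i i = ∏ s, A s i i := by
  rw [list_prod_apply_self (by simpa [List.mem_ofFn] using hA), List.map_reverse,
    List.prod_reverse, List.map_ofFn, List.prod_ofFn]
  rfl

end IsOneOffRow

theorem lastRow_entry_of_prod_general {R ι : Type*} [CommSemiring R] [Fintype ι] [DecidableEq ι]
    {m : ℕ} {A : Fin m → Matrix ι ι R} {i : ι} (hA : ∀ s, IsOneOffRow i (A s))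
    {q : ι} (hq : q ≠ i) :
    (List.ofFn A).reverse.prod i q = ∑ s, (∏ t ∈ Finset.Ioi s, A t i i) * A s i q := by
  induction m with
  | zero => simp [Matrix.one_apply_ne hq.symm]
  | succ m ih =>
    have hA' : ∀ s : Fin m, IsOneOffRow i (A s.succ) := fun s => hA s.succ
    rw [List.ofFn_succ, List.reverse_cons, List.prod_append, List.prod_singleton,
      (hA 0).mul_apply_of_ne _ _ hq, IsOneOffRow.reverse_ofFn_prod_apply_self hA', ih hA',
      Fin.sum_univ_succ, Fin.prod_Ioi_zero]
    simp only [Fin.prod_Ioi_succ]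

/-- The explicit formula of Lemma 2 for the off-diagonal entries of the last
row of a product `A_{m-1} ⋯ A_1 A_0` of matrices each equal to the identity
except in the last row: writing `b s q = A s last q` (for `q ≠ last`) and
`d s = A s last last`, the entry is `∑_s (∏_{t>s} d t) * b s q`. -/
theorem lastRow_entry_of_prod (k : Type*) [CommRing k] (n m : ℕ) (hm : 1 ≤ m)
    (A : Fin m → Matrix (Fin (n + 1)) (Fin (n + 1)) k)
    (hA : ∀ s, ∀ i, i ≠ Fin.last n → ∀ j,
      A s i j = (1 : Matrix (Fin (n + 1)) (Fin (n + 1)) k) i j)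
    (q : Fin (n + 1)) (hq : q ≠ Fin.last n) :
    (List.ofFn A).reverse.prod (Fin.last n) q
      = ∑ s : Fin m,
          (∏ t ∈ Finset.Ioi s, A t (Fin.last n) (Fin.last n))
            * A s (Fin.last n) q :=
  lastRow_entry_of_prod_general hA hq
end

section
/- Let k be a field, m ∈ ℕ, and let b, d : ℕ → k, h : ℕ → kˣ and g ∈ kˣ. Define α := ∑_{s=0}^{m} ( ∏_{t=s+1}^{m} d t ) * b s. Define the gauge-transformed data b' s := (g * (h s)⁻¹ : k) * b s and d' t := ((h (t-1)) * (h t)⁻¹ : k) * d t for t ≥ 1, and α' := ∑_{s=0}^{m} ( ∏_{t=s+1}^{m} d' t ) * b' s. Then α' = (g * (h m)⁻¹ : k) * α. -/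
/-!
The gauge factors `h (t - 1) / h t` telescope along a path from `s` to `m` to `h s / h m`.
The remaining factor `g / h s` then cancels `h s`, so every summand of the curvature coefficient
scales by the same unit `g / h m`.
-/

theorem prod_Icc_pred_div {G : Type*} [CommGroup G] (f : ℕ → G) {m n : ℕ} (hmn : m ≤ n) :
    ∏ t ∈ Finset.Icc (m + 1) n, f (t - 1) / f t = f m / f n := by
  rw [← Finset.Ico_add_one_right_eq_Icc, ← Finset.prod_Ico_add']
  simpa only [Nat.add_sub_cancel, Pi.inv_apply, inv_div_inv] using Finset.prod_Ico_div f⁻¹ hmn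

theorem prod_Icc_gauge_eq_div_mul_prod {M : Type*} [CommMonoid M] {d d' : ℕ → M}
    {h : ℕ → Mˣ} {m n : ℕ} (hmn : m ≤ n)
    (hd' : ∀ t ∈ Finset.Icc (m + 1) n, d' t = ↑(h (t - 1) / h t) * d t) :
    ∏ t ∈ Finset.Icc (m + 1) n, d' t = ↑(h m / h n) * ∏ t ∈ Finset.Icc (m + 1) n, d t := by
  rw [Finset.prod_congr rfl hd', Finset.prod_mul_distrib, ← Units.coe_prod,
    prod_Icc_pred_div h hmn]

theorem curvature_coefficient_gauge_general {R : Type*} [CommSemiring R] {m : ℕ}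
    {b d b' d' : ℕ → R} {h : ℕ → Rˣ} {g : Rˣ}
    (hb' : ∀ s ≤ m, b' s = ↑(g / h s) * b s)
    (hd' : ∀ t ∈ Finset.Icc 1 m, d' t = ↑(h (t - 1) / h t) * d t) :
    ∑ s ∈ Finset.range (m + 1), (∏ t ∈ Finset.Icc (s + 1) m, d' t) * b' s =
      ↑(g / h m) * ∑ s ∈ Finset.range (m + 1), (∏ t ∈ Finset.Icc (s + 1) m, d t) * b s := by
  rw [Finset.mul_sum]
  refine Finset.sum_congr rfl fun s hs => ?_
  have hsm : s ≤ m := Finset.mem_range_succ_iff.mp hs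
  have path_gauge : ∏ t ∈ Finset.Icc (s + 1) m, d' t =
      ↑(h s / h m) * ∏ t ∈ Finset.Icc (s + 1) m, d t :=
    prod_Icc_gauge_eq_div_mul_prod hsm fun t ht =>
      hd' t (Finset.Icc_subset_Icc_left (Nat.le_add_left 1 s) ht)
  calc (∏ t ∈ Finset.Icc (s + 1) m, d' t) * b' s
      = (↑(h s / h m) * ∏ t ∈ Finset.Icc (s + 1) m, d t) * (↑(g / h s) * b s) := by
        rw [path_gauge, hb' s hsm]
    _ = ↑(g / h s * (h s / h m)) * ((∏ t ∈ Finset.Icc (s + 1) m, d t) * b s) := by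
        rw [Units.val_mul]
        ring
    _ = ↑(g / h m) * ((∏ t ∈ Finset.Icc (s + 1) m, d t) * b s) := by
        rw [div_mul_div_cancel]

/-- The gauge-transformation claim of Lemma 2: under the abelian gauge
transformation `b s ↦ (g / h s) * b s`, `d t ↦ (h (t-1) / h t) * d t`, the
curvature coefficient `α = ∑_{s ≤ m} (∏_{s < t ≤ m} d t) * b s` transforms as
`α ↦ (g / h m) * α`. -/
theorem curvature_coefficient_gauge (k : Type*) [Field k] (m : ℕ)
    (b d : ℕ → k) (h : ℕ → kˣ) (g : kˣ)
    (α : k)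
    (hα : α = ∑ s ∈ Finset.range (m + 1), (∏ t ∈ Finset.Icc (s + 1) m, d t) * b s)
    (b' d' : ℕ → k)
    (hb' : ∀ s, b' s = ((g : k) * (((h s)⁻¹ : kˣ) : k)) * b s)
    (hd' : ∀ t, 1 ≤ t → d' t = ((h (t - 1) : k) * (((h t)⁻¹ : kˣ) : k)) * d t)
    (α' : k)
    (hα' : α' = ∑ s ∈ Finset.range (m + 1), (∏ t ∈ Finset.Icc (s + 1) m, d' t) * b' s) :
    α' = ((g : k) * (((h m)⁻¹ : kˣ) : k)) * α := by
  simp only [← Units.val_mul, ← div_eq_mul_inv] at hb' hd' ⊢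
  rw [hα', hα]
  exact curvature_coefficient_gauge_general (fun s _ => hb' s)
    fun t ht => hd' t (Finset.mem_Icc.mp ht).1
end

section
/- Let k be a field, m ≥ 1, and r : ZMod m → kˣ. Define μ := (-1)^m * ∏_{p : ZMod m} (r p : k), and for each p ∈ ZMod m define α p := ∑_{k=0}^{m-1} (-1)^k * ∏_{j=0}^{k} (r (p - j) : k). Then for every p ∈ ZMod m: α (p+1) = (r (p+1) : k) * (1 - μ - α p). -/
/-! Factoring `a 0` out of every product turns the alternating sum of length `n + 1` for a sequence
`a` into `a 0 * (1 - S)`, with `S` the sum of length `n` for the shifted sequence. If `a` runs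
backwards along the cycle from `p + 1`, the shifted sequence starts at `p`, so `S = α p` for
`n = m`. The longer sum exceeds `α (p + 1)` by one term, whose product makes a full turn and visits
`p + 1` once more: it is `r (p + 1) * μ`. -/

open Finset

section AlternatingProdSum

variable {R : Type*} [CommRing R] (a : ℕ → R) (n : ℕ)

/-- The alternating sum `a 0 - a 0 * a 1 + a 0 * a 1 * a 2 - ⋯` of the first `n` nonempty partial
products of a sequence. Along the star of a simplex it is the curvature coefficient `α*`; indexing
by `ℕ` instead of the cycle lets the length vary independently of the period. -/
def alternatingProdSum : R :=
  ∑ i ∈ range n, (-1) ^ i * ∏ j ∈ range (i + 1), a j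

theorem alternatingProdSum_succ :
    alternatingProdSum a (n + 1) =
      alternatingProdSum a n + (-1) ^ n * ∏ j ∈ range (n + 1), a j :=
  sum_range_succ _ n

theorem alternatingProdSum_succ' :
    alternatingProdSum a (n + 1) = a 0 * (1 - alternatingProdSum (fun j ↦ a (j + 1)) n) := by
  have factor_head (i : ℕ) : (-1) ^ (i + 1) * ∏ j ∈ range (i + 1 + 1), a j =
      -(a 0 * ((-1) ^ i * ∏ j ∈ range (i + 1), a (j + 1))) := by
    rw [prod_range_succ' a, pow_succ]
    ring
  simp only [alternatingProdSum, sum_range_succ' _ n, factor_head, sum_neg_distrib, ← mul_sum,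
    pow_zero, zero_add, prod_range_one]
  ring

theorem alternatingProdSum_eq_head_mul :
    alternatingProdSum a n =
      a 0 * (1 - (-1) ^ n * ∏ j ∈ range n, a (j + 1) -
        alternatingProdSum (fun j ↦ a (j + 1)) n) := by
  have two_expansions := (alternatingProdSum_succ a n).symm.trans (alternatingProdSum_succ' a n)
  rw [prod_range_succ' a] at two_expansions
  linear_combination two_expansions

end AlternatingProdSum

section CyclicProduct

variable {M : Type*} [CommMonoid M] {m : ℕ} [NeZero m] (f : ZMod m → M)

theorem prod_range_natCast_zmod : ∏ j ∈ range m, f j = ∏ q, f q :=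
  prod_nbij' (fun j ↦ (j : ZMod m)) ZMod.val (fun _ _ ↦ mem_univ _)
    (fun q _ ↦ mem_range.mpr q.val_lt) (fun _ hj ↦ ZMod.val_cast_of_lt (mem_range.mp hj))
    (fun q _ ↦ q.natCast_zmod_val) (fun _ _ ↦ rfl)

theorem prod_range_sub_natCast_zmod (p : ZMod m) : ∏ j ∈ range m, f (p - j) = ∏ q, f q :=
  (prod_range_natCast_zmod fun q ↦ f (p - q)).trans ((Equiv.subLeft p).prod_comp f)

end CyclicProduct

theorem alpha_star_recursion_general {R : Type*} [CommRing R] {m : ℕ} [NeZero m] (r : ZMod m → R)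
    {μ : R} (hμ : μ = (-1) ^ m * ∏ p, r p) {α : ZMod m → R}
    (hα : ∀ p, α p = ∑ i ∈ range m, (-1) ^ i * ∏ j ∈ range (i + 1), r (p - j)) (p : ZMod m) :
    α (p + 1) = r (p + 1) * (1 - μ - α p) := by
  have hα' (q : ZMod m) : α q = alternatingProdSum (fun j ↦ r (q - j)) m := hα q
  have shift (j : ℕ) : p + 1 - ((j + 1 : ℕ) : ZMod m) = p - j := by
    rw [Nat.cast_succ, add_sub_add_right_eq_sub]
  have recursion := alternatingProdSum_eq_head_mul (fun j ↦ r (p + 1 - j)) m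
  simp only [shift, Nat.cast_zero, sub_zero, prod_range_sub_natCast_zmod] at recursion
  rw [hα', hα', hμ, recursion]

/-- The recursion of Lemma 3 relating consecutive gauge-invariant curvature
coefficients: with `μ = (-1)^m ∏_p r p` and
`α p = ∑_{k<m} (-1)^k ∏_{j≤k} r (p - j)`, one has
`α (p+1) = r (p+1) * (1 - μ - α p)`. -/
theorem alpha_star_recursion (k : Type*) [Field k] (m : ℕ) [NeZero m]
    (r : ZMod m → kˣ)
    (μ : k) (hμ : μ = (-1 : k) ^ m * ∏ p, (r p : k))
    (α : ZMod m → k)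
    (hα : ∀ p, α p = ∑ i ∈ Finset.range m,
      (-1 : k) ^ i * ∏ j ∈ Finset.range (i + 1), (r (p - (j : ZMod m)) : k))
    (p : ZMod m) :
    α (p + 1) = (r (p + 1) : k) * (1 - μ - α p) :=
  alpha_star_recursion_general (fun q ↦ (r q : k)) hμ hα p
end

section
/- Let k be a field, m ≥ 1, and r : ZMod m → kˣ. For p ∈ ZMod m define α p := ∑_{k=0}^{m-1} (-1)^k * ∏_{j=0}^{k} (r (p - j) : k), and suppose the local unimodularity condition (-1)^m * ∏_{p} (r p : k) = 1 holds. Then for all p, p' ∈ ZMod m: α p = 0 if and only if α p' = 0. -/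
/-!
Every product in `α p` has the factor `r p`; the remaining factors form the empty product for
`i = 0` and, for larger `i`, the product of index `i - 1` in `α (p - 1)`. Hence
`α p = r p * (1 - μ - α (p - 1))`, where `μ` is `μ_σ`.
If `μ = 1` this reads `α p = -r p * α (p - 1)`; moreover every `r p`, being a factor of `μ`, is a
unit, so the coefficients at consecutive base points, hence at all base points, are associated.
-/

theorem prod_range_succ_sub_natCast {G M : Type*} [AddGroupWithOne G] [CommMonoid M]
    (f : G → M) (p : G) (n : ℕ) :
    ∏ j ∈ Finset.range (n + 1), f (p - j) = f p * ∏ j ∈ Finset.range n, f (p - 1 - j) := by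
  simp [Finset.prod_range_succ', sub_add_eq_sub_sub_swap, mul_comm]

theorem prod_range_sub_natCast_eq_prod_univ {M : Type*} [CommMonoid M] {m : ℕ} [NeZero m]
    (f : ZMod m → M) (p : ZMod m) :
    ∏ j ∈ Finset.range m, f (p - j) = ∏ q, f q := by
  obtain ⟨n, rfl⟩ := Nat.exists_eq_succ_of_ne_zero (NeZero.ne m)
  calc ∏ j ∈ Finset.range (n + 1), f (p - j)
      = ∏ q : Fin (n + 1), f (p - ((q : ℕ) : ZMod (n + 1))) := Finset.prod_range _
    _ = ∏ q : ZMod (n + 1), f (p - q) :=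
        Finset.prod_congr rfl fun q _ => congrArg (fun x => f (p - x)) (Fin.cast_val_eq_self q)
    _ = ∏ q, f q := (Equiv.subLeft p).prod_comp f

theorem eq_of_periodic_one {A : Type*} {m : ℕ} {f : ZMod m → A}
    (hf : Function.Periodic f 1) (a b : ZMod m) : f a = f b := by
  simpa using hf.int_mul (a - b).cast b

/-- The curvature coefficient `α*_{σ,q,p}` of the paper, for transport coefficients `r` indexed by
the star of `σ`. The index set is any additive group with one, and the number `m` of steps is a
separate argument; the star is the case where the index set is `ZMod m`. -/
def curvatureCoeff {G R : Type*} [AddGroupWithOne G] [CommRing R] (r : G → R) (m : ℕ) (p : G) : R :=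
  ∑ i ∈ Finset.range m, (-1) ^ i * ∏ j ∈ Finset.range (i + 1), r (p - j)

theorem curvatureCoeff_eq_mul {G R : Type*} [AddGroupWithOne G] [CommRing R]
    (r : G → R) (m : ℕ) (p : G) :
    curvatureCoeff r m p =
      r p * (1 - (-1) ^ m * ∏ j ∈ Finset.range m, r (p - 1 - j) - curvatureCoeff r m (p - 1)) := by
  let t (i : ℕ) : R := (-1) ^ i * ∏ j ∈ Finset.range i, r (p - 1 - j)
  have factor : curvatureCoeff r m p = r p * ∑ i ∈ Finset.range m, t i := by
    simp only [curvatureCoeff, prod_range_succ_sub_natCast, Finset.mul_sum, t, mul_left_comm]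
  have shift : curvatureCoeff r m (p - 1) = -∑ i ∈ Finset.range m, t (i + 1) := by
    simp [curvatureCoeff, t, pow_succ]
  have telescope : ∑ i ∈ Finset.range m, t (i + 1) - ∑ i ∈ Finset.range m, t i = t m - 1 := by
    rw [← Finset.sum_sub_distrib, Finset.sum_range_sub]
    simp [t]
  rw [factor, shift]
  linear_combination -r p * telescope

section ZMod

variable {R : Type*} [CommRing R] {m : ℕ} [NeZero m] {r : ZMod m → R}

theorem curvatureCoeff_zmod_eq_mul (p : ZMod m) :
    curvatureCoeff r m p =
      r p * (1 - (-1) ^ m * ∏ q, r q - curvatureCoeff r m (p - 1)) := by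
  rw [curvatureCoeff_eq_mul, prod_range_sub_natCast_eq_prod_univ]

theorem associated_curvatureCoeff_sub_one
    (hμ : (-1) ^ m * ∏ q, r q = 1) (p : ZMod m) :
    Associated (curvatureCoeff r m (p - 1)) (curvatureCoeff r m p) := by
  have unit_prod : IsUnit (∏ q, r q) := .of_mul_eq_one_right _ hμ
  have unit_r : IsUnit (r p) :=
    isUnit_of_dvd_unit (Finset.dvd_prod_of_mem r (Finset.mem_univ p)) unit_prod
  have recurrence : curvatureCoeff r m p = curvatureCoeff r m (p - 1) * -r p := by
    rw [curvatureCoeff_zmod_eq_mul, hμ]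
    ring
  rw [recurrence]
  exact associated_mul_unit_right _ _ unit_r.neg

theorem flatness_independent_of_basepoint_general
    (hμ : (-1) ^ m * ∏ q, r q = 1) (p p' : ZMod m) :
    Associated (curvatureCoeff r m p) (curvatureCoeff r m p') := by
  have periodic : Function.Periodic (fun q => Associates.mk (curvatureCoeff r m q)) 1 := fun q =>
    Associates.mk_eq_mk_iff_associated.2 <| by
      simpa using (associated_curvatureCoeff_sub_one hμ (q + 1)).symm
  exact Associates.mk_eq_mk_iff_associated.1 (eq_of_periodic_one periodic p p')

end ZMod

/-- Corollary 1: for locally unimodular connections (`μ_σ = (-1)^m ∏_p r p = 1`),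
the vanishing of the curvature coefficient `α p` does not depend on the initial
point `p` in the star. -/
theorem flatness_independent_of_basepoint (k : Type*) [Field k] (m : ℕ) [NeZero m]
    (r : ZMod m → kˣ)
    (α : ZMod m → k)
    (hα : ∀ p, α p = ∑ i ∈ Finset.range m,
      (-1 : k) ^ i * ∏ j ∈ Finset.range (i + 1), (r (p - (j : ZMod m)) : k))
    (hsl : (-1 : k) ^ m * ∏ p, (r p : k) = 1) :
    ∀ p p' : ZMod m, α p = 0 ↔ α p' = 0 := by
  intro p p'
  rw [hα p, hα p']
  exact (flatness_independent_of_basepoint_general hsl p p').eq_zero_iff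
end

section
/- Let k be a field, m ≥ 1, and r : ZMod m → kˣ. Define μ := (-1)^m * ∏_{p} (r p : k) and α p := ∑_{k=0}^{m-1} (-1)^k * ∏_{j=0}^{k} (r (p - j) : k). If α (p+1) ≠ 0, then 1 - μ - α p ≠ 0 and (r (p+1) : k) = α (p+1) / (1 - μ - α p). In particular, for generic connections (all α p ≠ 0) the data r is uniquely determined by the curvature coefficients α and μ. -/
/-!
Write `P i = ∏ j < i, r (p - j)`. The coefficient at `p + 1` is `r (p + 1)` times the alternating
sum of `P 0, …, P (m - 1)`, whereas the coefficient at `p` is the alternating sum of `P 1, …, P m`.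
Both sums begin with a plus sign, so adding them leaves only the end terms `P 0 - (-1) ^ m * P m`.
Here `P 0 = 1`, and `P m` is the product of `r` once around the cycle, so the end terms are `1 - μ`
and `α (p + 1) = r (p + 1) * (1 - μ - α p)`.
-/

open Finset

theorem prod_range_succ_apply_add_one_sub {A M : Type*} [AddGroupWithOne A] [CommMonoid M]
    (f : A → M) (p : A) (n : ℕ) :
    ∏ j ∈ range (n + 1), f (p + 1 - j) = f (p + 1) * ∏ j ∈ range n, f (p - j) := by
  simp only [prod_range_succ', Nat.cast_add_one, add_sub_add_right_eq_sub, Nat.cast_zero, sub_zero,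
    mul_comm]

theorem prod_range_apply_natCast {M : Type*} [CommMonoid M] {m : ℕ} [NeZero m] (f : ZMod m → M) :
    ∏ j ∈ range m, f j = ∏ q, f q := by
  obtain _ | n := m
  · exact absurd rfl (NeZero.ne 0)
  · exact (prod_range _).trans <| prod_congr rfl fun q _ => congrArg f (Fin.cast_val_eq_self q)

theorem prod_range_apply_sub_natCast {M : Type*} [CommMonoid M] {m : ℕ} [NeZero m]
    (f : ZMod m → M) (p : ZMod m) :
    ∏ j ∈ range m, f (p - j) = ∏ q, f q :=
  (prod_range_apply_natCast fun q => f (p - q)).trans <| (Equiv.subLeft p).prod_comp f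

theorem sum_range_neg_one_pow_mul_eq_sub_sum_succ {R : Type*} [Ring R] (P : ℕ → R) (n : ℕ) :
    ∑ i ∈ range n, (-1) ^ i * P i =
      P 0 - (-1) ^ n * P n - ∑ i ∈ range n, (-1) ^ i * P (i + 1) := by
  have h : ∑ i ∈ range n, ((-1) ^ i * P i - (-1) ^ (i + 1) * P (i + 1)) =
      (-1) ^ 0 * P 0 - (-1) ^ n * P n := sum_range_sub' (fun i => (-1) ^ i * P i) n
  simp only [pow_succ, mul_neg_one, neg_mul, sub_neg_eq_add, sum_add_distrib, pow_zero,
    one_mul] at h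
  exact eq_sub_of_add_eq h

theorem reconstruction_of_rho_from_curvature_general {R : Type*} [CommRing R] {m : ℕ} [NeZero m]
    (r : ZMod m → R) (μ : R) (hμ : μ = (-1) ^ m * ∏ p, r p) (α : ZMod m → R)
    (hα : ∀ p, α p = ∑ i ∈ range m, (-1) ^ i * ∏ j ∈ range (i + 1), r (p - j)) (p : ZMod m) :
    α (p + 1) = r (p + 1) * (1 - μ - α p) := by
  calc α (p + 1)
      = r (p + 1) * ∑ i ∈ range m, (-1) ^ i * ∏ j ∈ range i, r (p - j) := by
        simp only [hα, prod_range_succ_apply_add_one_sub, mul_sum, mul_left_comm]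
    _ = r (p + 1) * (1 - μ - α p) := by
        rw [sum_range_neg_one_pow_mul_eq_sub_sum_succ, prod_range_zero,
          prod_range_apply_sub_natCast, ← hμ, ← hα]

/-- Corollary 2: for generic connections the gauge-invariant data `r` can be
reconstructed from the curvature coefficients: if `α (p+1) ≠ 0` then
`1 - μ - α p ≠ 0` and `r (p+1) = α (p+1) / (1 - μ - α p)`. -/
theorem reconstruction_of_rho_from_curvature (k : Type*) [Field k] (m : ℕ) [NeZero m]
    (r : ZMod m → kˣ)
    (μ : k) (hμ : μ = (-1 : k) ^ m * ∏ p, (r p : k))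
    (α : ZMod m → k)
    (hα : ∀ p, α p = ∑ i ∈ Finset.range m,
      (-1 : k) ^ i * ∏ j ∈ Finset.range (i + 1), (r (p - (j : ZMod m)) : k))
    (p : ZMod m) (hne : α (p + 1) ≠ 0) :
    1 - μ - α p ≠ 0 ∧ (r (p + 1) : k) = α (p + 1) / (1 - μ - α p) := by
  have h := reconstruction_of_rho_from_curvature_general (fun q => (r q : k)) μ hμ α hα p
  have hden : 1 - μ - α p ≠ 0 := right_ne_zero_of_mul (h ▸ hne)
  exact ⟨hden, eq_div_of_mul_eq hden h.symm⟩
end
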